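/- Let λ > 0 and x_1, …, x_n ∈ ℝ^d, and define A_t = λI + Σ_{s=1}^t x_s x_sᵀ for 0 ≤ t ≤ n (so A_0 = λI). Then Σ_{t=1}^n min(1, x_tᵀ A_{t−1}⁻¹ x_t) ≤ 2·( log det(A_n) − d·log λ ). -/

import Mathlib

open Matrix Finset

/-!
By the matrix determinant lemma, `det A_t = det A_{t-1} * (1 + a_t)` with
`a_t = x_tᵀ A_{t-1}⁻¹ x_t ≥ 0`. Since `min 1 a ≤ 2 log (1 + a)` for `a ≥ 0`, each summand is at
most twice the increment of `log det A_t`, and these increments telescope.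
-/

theorem det_add_vecMulVec {m R : Type*} [Fintype m] [DecidableEq m] [CommRing R]
    {A : Matrix m m R} (hA : IsUnit A.det) (u v : m → R) :
    (A + vecMulVec u v).det = A.det * (1 + v ⬝ᵥ (A⁻¹ *ᵥ u)) := by
  have hfactor : A + vecMulVec u v = A * (1 + vecMulVec (A⁻¹ *ᵥ u) v) := by
    rw [Matrix.mul_add, Matrix.mul_one, mul_vecMulVec, mulVec_mulVec, mul_nonsing_inv A hA,
      one_mulVec]
  rw [hfactor, det_mul, vecMulVec_eq Unit, det_one_add_replicateCol_mul_replicateRow]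

theorem min_one_le_two_mul_log_one_add {a : ℝ} (ha : 0 ≤ a) :
    min 1 a ≤ 2 * Real.log (1 + a) := by
  calc
    min 1 a ≤ 2 * (2 * a / (a + 2)) := by
      rw [← mul_div_assoc, le_div_iff₀ (by linarith)]
      rcases le_total 1 a with h | h
      · rw [min_eq_left h]; linarith
      · rw [min_eq_right h]; nlinarith
    _ ≤ 2 * Real.log (1 + a) := by gcongr; exact Real.le_log_one_add_of_nonneg ha

section PosDef

variable {m : Type*} [Fintype m] [DecidableEq m]

theorem min_one_dotProduct_inv_mulVec_le {A : Matrix m m ℝ} (hA : A.PosDef) (v : m → ℝ) :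
    min 1 (v ⬝ᵥ (A⁻¹ *ᵥ v)) ≤
      2 * (Real.log (A + vecMulVec v v).det - Real.log A.det) := by
  have hv : 0 ≤ v ⬝ᵥ (A⁻¹ *ᵥ v) := by
    simpa using hA.inv.posSemidef.dotProduct_mulVec_nonneg v
  have hdet : A.det ≠ 0 := hA.det_pos.ne'
  rw [det_add_vecMulVec hdet.isUnit, Real.log_mul hdet (by positivity), add_sub_cancel_left]
  exact min_one_le_two_mul_log_one_add hv

theorem elliptical_potential_general {A₀ : Matrix m m ℝ} (hA₀ : A₀.PosDef) {x : ℕ → m → ℝ}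
    {A : ℕ → Matrix m m ℝ} (hA : ∀ t, A t = A₀ + ∑ s ∈ Icc 1 t, vecMulVec (x s) (x s)) (n : ℕ) :
    ∑ t ∈ Icc 1 n, min 1 (x t ⬝ᵥ ((A (t - 1))⁻¹ *ᵥ x t)) ≤
      2 * (Real.log (A n).det - Real.log A₀.det) := by
  have hpos (t : ℕ) : (A t).PosDef := by
    rw [hA]
    exact hA₀.add_posSemidef <| posSemidef_sum _ fun s _ ↦ posSemidef_vecMulVec_self_star (x s)
  have hsucc (t : ℕ) : A (t + 1) = A t + vecMulVec (x (t + 1)) (x (t + 1)) := by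
    rw [hA, hA, sum_Icc_succ_top (by omega), add_assoc]
  induction n with
  | zero => simp [hA]
  | succ n ih =>
    have hstep := min_one_dotProduct_inv_mulVec_le (hpos n) (x (n + 1))
    rw [← hsucc] at hstep
    rw [sum_Icc_succ_top (by omega), Nat.add_sub_cancel]
    linarith

end PosDef

/-- Elliptical potential lemma:
`∑_{t=1}^n min(1, x_tᵀ A_{t−1}⁻¹ x_t) ≤ 2 (log det A_n − d log λ)`. -/
theorem elliptical_potential {d n : ℕ} (lam : ℝ) (hlam : 0 < lam)
    (x : ℕ → (Fin d → ℝ)) (A : ℕ → Matrix (Fin d) (Fin d) ℝ)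
    (hA : ∀ t : ℕ, A t = lam • (1 : Matrix (Fin d) (Fin d) ℝ) +
      ∑ s ∈ Finset.Icc 1 t, vecMulVec (x s) (x s)) :
    ∑ t ∈ Finset.Icc 1 n, min 1 (x t ⬝ᵥ ((A (t - 1))⁻¹ *ᵥ x t)) ≤
      2 * (Real.log (A n).det - (d : ℝ) * Real.log lam) := by
  simpa [det_smul, Real.log_pow] using elliptical_potential_general (PosDef.one.smul hlam) hA n
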